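/- Let (a_0, (a_t, a_{t-1}, …, a_1)) belong to the inductively defined collection 𝒜, with t ≥ 2. Then for every integer i with 0 ≤ i ≤ t − 2 one has the strict inequalities 0 < [a_t, a_{t-1}, …, a_{t-i}] < [a_t, a_{t-1}, …, a_1]. -/

import Mathlib

/-!
If every denominator met in evaluating `[a_t, …, a_1]` is positive, then dropping final entries
replaces a positive inner value by `0`. This enlarges each enclosing denominator in turn, which
therefore stays positive, and so lowers the value of the whole fraction.

Positivity of the denominators is inherited along the rules for `𝒜` because of the identity
`[1, c + 1, …] = [c, …] + 1`: inserting `1` between `b` and `c` raises the inner value by `1`,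
which raising `b` to `b + 1` exactly cancels.
-/

/-- Continued fraction value of a list `(a_t, a_{t-1}, …, a_1)` (head is `a_t`):
`cf [] = 0`, `cf (a :: L) = 1/(a - cf L)` (total division of `ℚ`, `1/0 = 0`).
In particular `cf [a₁] = 1/a₁`. -/
def cf : List ℚ → ℚ
  | [] => 0
  | a :: L => 1 / (a - cf L)

/-- The inductively defined collection `𝒜` of pairs `(a₀, (a_t, …, a_1))`. -/
inductive chainSet : ℚ → List ℚ → Prop
  | base : chainSet 1 [1]
  | grow (a₀ a : ℚ) (L : List ℚ) : chainSet a₀ (a :: L) →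
      chainSet (a₀ + 1) (1 :: (a + 1) :: L)
  | split (a₀ b c : ℚ) (L₁ L₂ : List ℚ) : chainSet a₀ (L₁ ++ b :: c :: L₂) →
      chainSet a₀ (L₁ ++ (b + 1) :: 1 :: (c + 1) :: L₂)

/-- All denominators `a - cf L` met in evaluating the continued fraction are positive; stated as
`cf L < a`. This is the invariant of `chainSet` that makes `cf` behave monotonically, and it keeps
the evaluation away from the junk value `1 / 0 = 0`. -/
inductive DenomsPos : List ℚ → Prop
  | nil : DenomsPos []
  | cons {a : ℚ} {L : List ℚ} : DenomsPos L → cf L < a → DenomsPos (a :: L)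

theorem denomsPos_cons {a : ℚ} {L : List ℚ} : DenomsPos (a :: L) ↔ DenomsPos L ∧ cf L < a :=
  ⟨fun | .cons hL ha => ⟨hL, ha⟩, fun ⟨hL, ha⟩ => .cons hL ha⟩

theorem cf_append_congr {M N : List ℚ} (K : List ℚ) (h : cf M = cf N) :
    cf (K ++ M) = cf (K ++ N) := by
  induction K with
  | nil => exact h
  | cons a K ih => simp only [List.cons_append, cf, ih]

theorem cf_one_cons_add_one_cons {c : ℚ} {L : List ℚ} (hc : c ≠ cf L) (hc' : c + 1 ≠ cf L) :
    cf (1 :: (c + 1) :: L) = cf (c :: L) + 1 := by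
  have hd : c - cf L ≠ 0 := sub_ne_zero.mpr hc
  have hd' : c + 1 - cf L ≠ 0 := sub_ne_zero.mpr hc'
  have hdenom : 1 - 1 / (c + 1 - cf L) = (c - cf L) / (c + 1 - cf L) := by
    field_simp
    ring
  simp only [cf]
  rw [hdenom, one_div_div]
  field_simp
  ring

theorem cf_add_one_cons {b : ℚ} {M N : List ℚ} (h : cf N = cf M + 1) :
    cf ((b + 1) :: N) = cf (b :: M) := by
  simp only [cf, h, add_sub_add_right_eq_sub]

namespace DenomsPos

variable {a b c : ℚ} {K L M N : List ℚ}

theorem cf_pos (h : DenomsPos L) (hL : L ≠ []) : 0 < cf L := by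
  cases h with
  | nil => contradiction
  | cons _ ha => exact one_div_pos.mpr (sub_pos.mpr ha)

theorem of_append_right (h : DenomsPos (K ++ M)) : DenomsPos M := by
  induction K with
  | nil => exact h
  | cons a K ih => exact ih (denomsPos_cons.mp h).1

theorem append_congr (h : DenomsPos (K ++ M)) (hN : DenomsPos N) (hcf : cf M = cf N) :
    DenomsPos (K ++ N) := by
  induction K with
  | nil => exact hN
  | cons a K ih =>
    obtain ⟨hKM, ha⟩ := denomsPos_cons.mp h
    exact .cons (ih hKM) (cf_append_congr K hcf ▸ ha)

theorem cf_one_cons_add_one (h : DenomsPos (c :: L)) :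
    cf (1 :: (c + 1) :: L) = cf (c :: L) + 1 := by
  have hc : cf L < c := (denomsPos_cons.mp h).2
  exact cf_one_cons_add_one_cons hc.ne' (hc.trans (lt_add_one c)).ne'

theorem one_cons_add_one (h : DenomsPos (a :: L)) : DenomsPos (1 :: (a + 1) :: L) := by
  obtain ⟨hL, ha⟩ := denomsPos_cons.mp h
  have hcf : cf ((a + 1) :: L) < 1 := by
    simp only [cf]
    rw [div_lt_one] <;> linarith
  exact .cons (.cons hL (ha.trans (lt_add_one a))) hcf

theorem cf_insert_one (h : DenomsPos (b :: c :: L)) :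
    cf ((b + 1) :: 1 :: (c + 1) :: L) = cf (b :: c :: L) :=
  cf_add_one_cons (denomsPos_cons.mp h).1.cf_one_cons_add_one

theorem insert_one (h : DenomsPos (b :: c :: L)) :
    DenomsPos ((b + 1) :: 1 :: (c + 1) :: L) := by
  obtain ⟨hcL, hb⟩ := denomsPos_cons.mp h
  refine .cons hcL.one_cons_add_one ?_
  rw [hcL.cf_one_cons_add_one]
  gcongr

theorem cf_take_lt (h : DenomsPos L) {n : ℕ} (hn : n < L.length) : cf (L.take n) < cf L := by
  induction h generalizing n with
  | nil => contradiction
  | @cons a L hL ha ih =>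
    cases n with
    | zero => exact (hL.cons ha).cf_pos (List.cons_ne_nil a L)
    | succ k =>
      have hlt : cf (L.take k) < cf L := ih (Nat.lt_of_succ_lt_succ hn)
      exact one_div_lt_one_div_of_lt (sub_pos.mpr ha) (sub_lt_sub_left hlt a)

theorem cf_take_le (h : DenomsPos L) (n : ℕ) : cf (L.take n) ≤ cf L := by
  obtain hn | hn := lt_or_ge n L.length
  · exact (h.cf_take_lt hn).le
  · rw [List.take_of_length_le hn]

theorem take (h : DenomsPos L) (n : ℕ) : DenomsPos (L.take n) := by
  induction h generalizing n with
  | nil => simpa using nil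
  | cons hL ha ih =>
    cases n with
    | zero => exact nil
    | succ k => exact .cons (ih k) ((hL.cf_take_le k).trans_lt ha)

end DenomsPos

theorem chainSet.denomsPos {a₀ : ℚ} {L : List ℚ} (hA : chainSet a₀ L) : DenomsPos L := by
  induction hA with
  | base => exact .cons .nil zero_lt_one
  | grow _ _ _ _ ih => exact ih.one_cons_add_one
  | split _ _ _ _ _ _ ih =>
    have hbc := ih.of_append_right
    exact ih.append_congr hbc.insert_one hbc.cf_insert_one.symm

/-- If `(a₀, (a_t, …, a_1)) ∈ 𝒜` with `t ≥ 2`, then for every `0 ≤ i ≤ t - 2`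
one has `0 < [a_t, …, a_{t-i}] < [a_t, …, a_1]`, where `[a_t, …, a_{t-i}]` is the
continued fraction of the initial segment of length `i + 1`. -/
theorem chainSet_initial_cf_lt (a₀ : ℚ) (L : List ℚ) (hA : chainSet a₀ L)
    (ht : 2 ≤ L.length) (i : ℕ) (hi : i ≤ L.length - 2) :
    0 < cf (L.take (i + 1)) ∧ cf (L.take (i + 1)) < cf L := by
  have hL : DenomsPos L := hA.denomsPos
  have hlt : i + 1 < L.length := by omega
  have hne : L.take (i + 1) ≠ [] :=
    List.ne_nil_of_length_pos (by rw [List.length_take]; omega)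
  exact ⟨(hL.take (i + 1)).cf_pos hne, hL.cf_take_lt hlt⟩
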